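/- (Theorem 4, relation for UOc) Let n ≥ 1 and g ≥ 0, and let U_g be the set of genus-g elements of the coset U = β·C_ρ in S_{2n}. Write N(T) for the number of equivalence classes of U_g under the equivalence relation generated by σ ≈ β²·σ·β⁻² together with σ ≈ t(σ) for each map t in the set T, where the possible maps are the reversal σ ↦ r·σ·r and the swap σ ↦ β⁻¹·ρ·σ⁻¹·β. Then: if n is even, N({reversal}) = N({swap}); and if n is odd, N({reversal}) = 2·N({reversal, swap}). -/

import Mathlib

/-- The fixed-point-free involution of `Fin (2n)` pairing `2k` with `2k+1`. -/
def rho (n : ℕ) : Equiv.Perm (Fin (2 * n)) :=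
  Function.Involutive.toPerm
    (fun x => ⟨if x.val % 2 = 0 then x.val + 1 else x.val - 1, by
      have := x.isLt; split_ifs with h <;> omega⟩)
    (by
      intro x
      have hx := x.isLt
      apply Fin.ext
      dsimp only
      split_ifs <;> omega)

/-- The order-reversing involution `x ↦ 2n - 1 - x` of `Fin (2n)`. -/
def rev (n : ℕ) : Equiv.Perm (Fin (2 * n)) :=
  Function.Involutive.toPerm
    (fun x => ⟨2 * n - 1 - x.val, by have := x.isLt; omega⟩)
    (by
      intro x
      have hx := x.isLt
      apply Fin.ext
      dsimp only
      omega)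

/-- The number of cycles of a permutation of `Fin (2n)`, counting fixed points. -/
def numCycles (n : ℕ) (x : Equiv.Perm (Fin (2 * n))) : ℕ :=
  Multiset.card x.cycleType + (2 * n - x.support.card)

/-- The genus-`g` part of the coset `U = β·C_ρ`. -/
def Ugen (n g : ℕ) : Set (Equiv.Perm (Fin (2 * n))) :=
  {σ | (∃ ξ ∈ Subgroup.centralizer {rho n}, σ = finRotate (2 * n) * ξ) ∧
       numCycles n σ + numCycles n (σ * rho n) + 2 * g = n + 2}

/-- The number of equivalence classes of a set `s` of permutations under the smallest
equivalence relation identifying `σ` with `f σ` for every `f` in `F`. -/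
noncomputable def numClasses (n : ℕ) (s : Set (Equiv.Perm (Fin (2 * n))))
    (F : Set (Equiv.Perm (Fin (2 * n)) → Equiv.Perm (Fin (2 * n)))) : ℕ :=
  Nat.card (Quot (fun a b : s => ∃ f ∈ F, (b : Equiv.Perm (Fin (2 * n))) = f a))

/-- Conjugation by `β²`. -/
def conjB2 (n : ℕ) : Equiv.Perm (Fin (2 * n)) → Equiv.Perm (Fin (2 * n)) :=
  fun σ => finRotate (2 * n) ^ 2 * σ * (finRotate (2 * n) ^ 2)⁻¹

/-- The swap map `σ ↦ β⁻¹·ρ·σ⁻¹·β`. -/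
def swapMap (n : ℕ) : Equiv.Perm (Fin (2 * n)) → Equiv.Perm (Fin (2 * n)) :=
  fun σ => (finRotate (2 * n))⁻¹ * rho n * σ⁻¹ * finRotate (2 * n)

/-- The mirror map `σ ↦ σ·ρ`. -/
def mirrorMap (n : ℕ) : Equiv.Perm (Fin (2 * n)) → Equiv.Perm (Fin (2 * n)) :=
  fun σ => σ * rho n

/-- The reversal map `σ ↦ r·σ·r`. -/
def revMap (n : ℕ) : Equiv.Perm (Fin (2 * n)) → Equiv.Perm (Fin (2 * n)) :=
  fun σ => rev n * σ * rev n

/-!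
Writing `σ = β ξ` with `ξ ∈ C_ρ`, conjugation, reversal and swap become `ξ ↦ β² ξ β⁻²`,
`ξ ↦ β⁻² r ξ r` and `ξ ↦ β⁻² ρ ξ⁻¹`. The group `C_ρ` permutes the `n` pairs `{2k, 2k+1}`: `β²` acts
on them as an `n`-cycle and `ρ` acts trivially. If `n` is even, the sign of the action of `ξ` is
therefore preserved by conjugation and negated by both reversal and swap, so each of these two
matches up the conjugation classes in pairs, and both counts are half the number of conjugation
classes. If `n` is odd, then `ρ`, a product of `n` transpositions, is odd, and the sign of `σ`
itself is preserved by conjugation and reversal and negated by swap.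
-/

open Equiv Set
open scoped Pointwise

section QuotientCount

variable {X : Type*} {R : X → X → Prop} {t : X → X}

theorem quot_mk_eq_or_eq_of_quot_mk_eq
    (hcomm : ∀ a b, R a b → Quot.mk R (t a) = Quot.mk R (t b))
    (hinvol : ∀ a, Quot.mk R (t (t a)) = Quot.mk R a) {a b : X}
    (hab : Quot.mk (fun a b => R a b ∨ b = t a) a = Quot.mk (fun a b => R a b ∨ b = t a) b) :
    Quot.mk R a = Quot.mk R b ∨ Quot.mk R a = Quot.mk R (t b) := by
  let classPair : Quot (fun a b => R a b ∨ b = t a) → Set (Quot R) :=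
    Quot.lift (fun a => {Quot.mk R a, Quot.mk R (t a)}) <| by
      rintro a b (h | rfl)
      · simp only [Quot.sound h, hcomm a b h]
      · simp only [hinvol, Set.pair_comm]
  have hpair : classPair (Quot.mk _ a) = classPair (Quot.mk _ b) := congrArg classPair hab
  have hmem : Quot.mk R a ∈ classPair (Quot.mk _ a) := Set.mem_insert _ _
  rwa [hpair] at hmem

theorem card_quot_eq_two_mul_of_sign {e : X → ℤˣ} (he : ∀ a b, R a b → e a = e b)
    (het : ∀ a, e (t a) = -e a) (hcomm : ∀ a b, R a b → Quot.mk R (t a) = Quot.mk R (t b))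
    (hinvol : ∀ a, Quot.mk R (t (t a)) = Quot.mk R a) :
    Nat.card (Quot R) = 2 * Nat.card (Quot fun a b => R a b ∨ b = t a) := by
  let R' : X → X → Prop := fun a b => R a b ∨ b = t a
  let classAndSign : Quot R → Quot R' × ℤˣ :=
    fun q => (Quot.map id (fun _ _ => Or.inl) q, Quot.lift e he q)
  have hinj : Function.Injective classAndSign := by
    rintro ⟨a⟩ ⟨b⟩ hab
    obtain ⟨hclass, hsign⟩ := Prod.ext_iff.1 hab
    refine (quot_mk_eq_or_eq_of_quot_mk_eq hcomm hinvol hclass).resolve_right fun hat => ?_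
    have hflip : e a = e (t b) := congrArg (Quot.lift e he) hat
    exact neg_units_ne_self (e b) ((het b).symm.trans (hflip.symm.trans hsign))
  have hsurj : Function.Surjective classAndSign := by
    rintro ⟨⟨a⟩, u⟩
    by_cases hu : u = e a
    · exact ⟨Quot.mk R a, Prod.ext rfl hu.symm⟩
    · exact ⟨Quot.mk R (t a), Prod.ext (Quot.sound (r := R') (Or.inr rfl)).symm
        ((het a).trans (Int.units_ne_iff_eq_neg.1 hu).symm)⟩
  rw [Nat.card_congr (Equiv.ofBijective classAndSign ⟨hinj, hsurj⟩), Nat.card_prod, mul_comm,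
    Nat.card_eq_fintype_card (α := ℤˣ), Fintype.card_units_int]

end QuotientCount

section NumClasses

variable {n : ℕ} {s : Set (Perm (Fin (2 * n)))} {F : Set (Perm (Fin (2 * n)) → Perm (Fin (2 * n)))}

/-- The identifications `σ ≈ f σ`, for `f ∈ F`, that generate the equivalence relation on `s` whose
classes `numClasses` counts. -/
abbrev Step (s : Set (Perm (Fin (2 * n)))) (F : Set (Perm (Fin (2 * n)) → Perm (Fin (2 * n))))
    (a b : s) : Prop :=
  ∃ f ∈ F, (b : Perm (Fin (2 * n))) = f a

theorem quot_mk_step_apply {f : Perm (Fin (2 * n)) → Perm (Fin (2 * n))} (hf : f ∈ F) {a b : s}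
    (hab : f a = b) : Quot.mk (Step s F) b = Quot.mk (Step s F) a :=
  (Quot.sound ⟨f, hf, hab.symm⟩).symm

theorem numClasses_eq_two_mul_numClasses_insert {t : Perm (Fin (2 * n)) → Perm (Fin (2 * n))}
    (ht : MapsTo t s s) (e : s → ℤˣ)
    (he : ∀ f ∈ F, ∀ (a : s) (h : f a ∈ s), e ⟨f a, h⟩ = e a)
    (het : ∀ a : s, e ⟨t a, ht a.2⟩ = -e a)
    (hcomm : ∀ f ∈ F, ∀ (a : s) (h : f a ∈ s),
      Quot.mk (Step s F) ⟨t (f a), ht h⟩ = Quot.mk (Step s F) ⟨t a, ht a.2⟩)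
    (hinvol : ∀ a : s, Quot.mk (Step s F) ⟨t (t a), ht (ht a.2)⟩ = Quot.mk (Step s F) a) :
    numClasses n s F = 2 * numClasses n s (insert t F) := by
  have hinsert : Step s (insert t F) = fun a b => Step s F a b ∨ b = ⟨t a, ht a.2⟩ := by
    funext a b
    simp only [Step, Set.exists_mem_insert, Subtype.ext_iff, or_comm]
  change Nat.card (Quot (Step s F)) = 2 * Nat.card (Quot (Step s (insert t F)))
  rw [hinsert]
  refine card_quot_eq_two_mul_of_sign (e := e) ?_ het ?_ hinvol
  · rintro a ⟨_, hb⟩ ⟨f, hf, rfl⟩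
    exact (he f hf a hb).symm
  · rintro a ⟨_, hb⟩ ⟨f, hf, rfl⟩
    exact (hcomm f hf a hb).symm

end NumClasses

theorem val_finRotate {m : ℕ} (x : Fin m) :
    (finRotate m x).val = if x.val + 1 = m then 0 else x.val + 1 := by
  obtain _ | m := m
  · exact x.elim0
  · simp only [coe_finRotate, Fin.ext_iff, Fin.val_last, Nat.add_right_cancel_iff]

section Permutations

variable (n : ℕ)

local notation "β" => finRotate (2 * n)
local notation "ρ" => rho n
local notation "r" => rev n

section Relations

theorem val_rho (x : Fin (2 * n)) :
    (ρ x).val = if x.val % 2 = 0 then x.val + 1 else x.val - 1 := rfl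

theorem val_rev (x : Fin (2 * n)) : (r x).val = 2 * n - 1 - x.val := rfl

theorem rho_inv : ρ⁻¹ = ρ := rfl

theorem rev_inv : r⁻¹ = r := rfl

theorem rho_mul_self : ρ * ρ = 1 := inv_mul_cancel ρ

theorem commute_rev_rho : Commute r ρ := by
  ext x
  have := x.isLt
  have := val_rev n x
  rw [Perm.mul_apply, Perm.mul_apply, val_rev, val_rho, val_rho]
  split_ifs <;> omega

theorem commute_finRotate_sq_rho : Commute (β ^ 2) ρ := by
  ext x
  have := x.isLt
  simp only [pow_two, Perm.mul_apply, val_rho, val_finRotate]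
  split_ifs <;> omega

theorem semiconjBy_rev_finRotate : SemiconjBy r β β⁻¹ := by
  rw [SemiconjBy, eq_inv_mul_iff_mul_eq]
  ext x
  have := x.isLt
  simp only [Perm.mul_apply, val_rev, val_finRotate]
  split_ifs <;> omega

theorem rev_mul_inv_finRotate : r * β⁻¹ = β * r := by
  simpa only [inv_inv] using (semiconjBy_rev_finRotate n).inv_right.eq

theorem sign_rho : Perm.sign ρ = (-1) ^ n := by
  have hfixed : IsEmpty (Function.fixedPoints ρ) := by
    refine ⟨fun ⟨x, hx⟩ => ?_⟩
    have hval : (ρ x).val = x.val := congrArg Fin.val hx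
    rw [val_rho] at hval
    split_ifs at hval <;> omega
  rw [Perm.sign_of_pow_two_eq_one ((pow_two ρ).trans (rho_mul_self n)), Fintype.card_fin,
    Fintype.card_eq_zero, Nat.sub_zero, Nat.mul_div_cancel_left _ two_pos]

end Relations

section Coset

/-- The left coset `U = β·C_ρ`. -/
def rotCoset : Set (Perm (Fin (2 * n))) := β • (Subgroup.centralizer {ρ} : Set (Perm (Fin (2 * n))))

variable {n} {σ : Perm (Fin (2 * n))}

theorem mem_rotCoset_iff : σ ∈ rotCoset n ↔ β⁻¹ * σ ∈ Subgroup.centralizer {ρ} :=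
  mem_leftCoset_iff β

theorem commute_of_mem_rotCoset (hσ : σ ∈ rotCoset n) : Commute (β⁻¹ * σ) ρ :=
  Subgroup.mem_centralizer_singleton_iff.1 (mem_rotCoset_iff.1 hσ)

variable (n)

/-- `β²` as an element of the centralizer of `ρ`. -/
def centralizerRotSq : Subgroup.centralizer {ρ} :=
  ⟨β ^ 2, Subgroup.mem_centralizer_singleton_iff.2 (commute_finRotate_sq_rho n)⟩

/-- `r` as an element of the centralizer of `ρ`. -/
def centralizerRev : Subgroup.centralizer {ρ} :=
  ⟨r, Subgroup.mem_centralizer_singleton_iff.2 (commute_rev_rho n)⟩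

/-- `ρ` as an element of its own centralizer. -/
def centralizerRho : Subgroup.centralizer {ρ} :=
  ⟨ρ, Subgroup.mem_centralizer_singleton_iff.2 rfl⟩

variable {n} in
/-- The factor `ξ ∈ C_ρ` of an element `σ = β·ξ` of `U`. -/
def centralizerPart (σ : rotCoset n) : Subgroup.centralizer {ρ} :=
  ⟨β⁻¹ * σ.1, mem_rotCoset_iff.1 σ.2⟩

variable (σ)

theorem inv_finRotate_mul_conjB2 : β⁻¹ * conjB2 n σ = β ^ 2 * (β⁻¹ * σ) * (β ^ 2)⁻¹ := by
  unfold conjB2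
  group

theorem inv_finRotate_mul_revMap : β⁻¹ * revMap n σ = (β ^ 2)⁻¹ * r * (β⁻¹ * σ) * r := by
  calc β⁻¹ * revMap n σ = (β ^ 2)⁻¹ * (β * r) * σ * r := by unfold revMap; group
    _ = (β ^ 2)⁻¹ * r * (β⁻¹ * σ) * r := by rw [← rev_mul_inv_finRotate]; group

theorem inv_finRotate_mul_swapMap : β⁻¹ * swapMap n σ = (β ^ 2)⁻¹ * ρ * (β⁻¹ * σ)⁻¹ := by
  unfold swapMap
  group

theorem mapsTo_revMap_rotCoset : MapsTo (revMap n) (rotCoset n) (rotCoset n) := by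
  intro σ hσ
  rw [mem_rotCoset_iff, inv_finRotate_mul_revMap]
  exact ((centralizerRotSq n)⁻¹ * centralizerRev n * centralizerPart ⟨σ, hσ⟩ *
    centralizerRev n).2

theorem mapsTo_swapMap_rotCoset : MapsTo (swapMap n) (rotCoset n) (rotCoset n) := by
  intro σ hσ
  rw [mem_rotCoset_iff, inv_finRotate_mul_swapMap]
  exact ((centralizerRotSq n)⁻¹ * centralizerRho n * (centralizerPart ⟨σ, hσ⟩)⁻¹).2

theorem revMap_revMap : revMap n (revMap n σ) = σ := by
  calc revMap n (revMap n σ) = r⁻¹ * (r * σ * r⁻¹) * r := rfl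
    _ = σ := by group

theorem conjB2_revMap_conjB2 : conjB2 n (revMap n (conjB2 n σ)) = revMap n σ := by
  have hrev : r * β ^ 2 = (β ^ 2)⁻¹ * r := by
    simpa only [inv_pow] using ((semiconjBy_rev_finRotate n).pow_right 2).eq
  calc conjB2 n (revMap n (conjB2 n σ))
      = β ^ 2 * (r * β ^ 2) * σ * (β ^ 2 * (r * β ^ 2))⁻¹ := by
        simp only [conjB2, revMap, mul_inv_rev, rev_inv, mul_assoc]
    _ = r * σ * r⁻¹ := by rw [hrev]; group
    _ = revMap n σ := rfl

theorem swapMap_conjB2 : swapMap n (conjB2 n σ) = conjB2 n (swapMap n σ) := by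
  calc swapMap n (conjB2 n σ) = β⁻¹ * (ρ * β ^ 2) * σ⁻¹ * (β ^ 2)⁻¹ * β := by
        unfold swapMap conjB2; group
    _ = conjB2 n (swapMap n σ) := by
        rw [← (commute_finRotate_sq_rho n).eq]; unfold swapMap conjB2; group

theorem conjB2_swapMap_revMap : conjB2 n (swapMap n (revMap n σ)) = revMap n (swapMap n σ) := by
  calc conjB2 n (swapMap n (revMap n σ)) = β * (ρ * r⁻¹) * σ⁻¹ * (β * r)⁻¹ := by
        unfold conjB2 swapMap revMap; group
    _ = β * r * ρ * σ⁻¹ * (β * r)⁻¹ := by rw [rev_inv, ← (commute_rev_rho n).eq]; group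
    _ = r * β⁻¹ * ρ * σ⁻¹ * β * r⁻¹ := by rw [← rev_mul_inv_finRotate]; group
    _ = revMap n (swapMap n σ) := rfl

variable {σ}

theorem conjB2_swapMap_swapMap (hσ : σ ∈ rotCoset n) :
    conjB2 n (swapMap n (swapMap n σ)) = σ := by
  calc conjB2 n (swapMap n (swapMap n σ)) = β * ρ * (β⁻¹ * σ * ρ⁻¹) := by
        unfold conjB2 swapMap; group
    _ = β * (ρ * ρ) * (β⁻¹ * σ) := by rw [rho_inv, (commute_of_mem_rotCoset hσ).eq]; group
    _ = σ := by rw [rho_mul_self]; group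

end Coset

section Genus

variable {n}

theorem numCycles_conj (x y : Perm (Fin (2 * n))) :
    numCycles n (y * x * y⁻¹) = numCycles n x := by
  unfold numCycles
  rw [Perm.cycleType_conj, Perm.card_support_conj]

theorem numCycles_inv (x : Perm (Fin (2 * n))) : numCycles n x⁻¹ = numCycles n x := by
  unfold numCycles
  rw [Perm.cycleType_inv, Perm.support_inv]

theorem numCycles_revMap (σ : Perm (Fin (2 * n))) : numCycles n (revMap n σ) = numCycles n σ :=
  numCycles_conj σ r

theorem revMap_mul_rho (σ : Perm (Fin (2 * n))) : revMap n σ * ρ = revMap n (σ * ρ) := by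
  simp only [revMap, mul_assoc, (commute_rev_rho n).eq]

theorem numCycles_swapMap (σ : Perm (Fin (2 * n))) :
    numCycles n (swapMap n σ) = numCycles n (σ * ρ) := by
  have hconj : swapMap n σ = β⁻¹ * (σ * ρ)⁻¹ * (β⁻¹)⁻¹ := by
    rw [mul_inv_rev, rho_inv, inv_inv, swapMap, mul_assoc β⁻¹]
  rw [hconj, numCycles_conj, numCycles_inv]

theorem numCycles_swapMap_mul_rho {σ : Perm (Fin (2 * n))} (hσ : σ ∈ rotCoset n) :
    numCycles n (swapMap n σ * ρ) = numCycles n σ := by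
  have hconj : swapMap n σ * ρ = β⁻¹ * σ⁻¹ * (β⁻¹)⁻¹ := by
    calc swapMap n σ * ρ = β⁻¹ * ρ * ((β⁻¹ * σ)⁻¹ * ρ) := by unfold swapMap; group
      _ = β⁻¹ * (ρ * ρ) * (β⁻¹ * σ)⁻¹ := by
        rw [(commute_of_mem_rotCoset hσ).inv_left.eq]; group
      _ = β⁻¹ * σ⁻¹ * (β⁻¹)⁻¹ := by rw [rho_mul_self]; group
  rw [hconj, numCycles_conj, numCycles_inv]

variable (n) (g : ℕ)

theorem mem_Ugen_iff {σ : Perm (Fin (2 * n))} :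
    σ ∈ Ugen n g ↔
      σ ∈ rotCoset n ∧ numCycles n σ + numCycles n (σ * ρ) + 2 * g = n + 2 :=
  and_congr_left fun _ => exists_congr fun _ => and_congr_right fun _ => eq_comm

theorem Ugen_subset_rotCoset : Ugen n g ⊆ rotCoset n :=
  fun _ hσ => ((mem_Ugen_iff n g).1 hσ).1

theorem mapsTo_revMap_Ugen : MapsTo (revMap n) (Ugen n g) (Ugen n g) := by
  intro σ hσ
  rw [mem_Ugen_iff] at hσ ⊢
  rw [revMap_mul_rho, numCycles_revMap, numCycles_revMap]
  exact hσ.imp_left fun h => mapsTo_revMap_rotCoset n h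

theorem mapsTo_swapMap_Ugen : MapsTo (swapMap n) (Ugen n g) (Ugen n g) := by
  intro σ hσ
  obtain ⟨hcoset, hgenus⟩ := (mem_Ugen_iff n g).1 hσ
  rw [mem_Ugen_iff, numCycles_swapMap, numCycles_swapMap_mul_rho hcoset,
    add_comm (numCycles n (σ * ρ))]
  exact ⟨mapsTo_swapMap_rotCoset n hcoset, hgenus⟩

end Genus

section PairSign

variable {n}

/-- The index `k` of the pair `{2k, 2k+1}` containing a point. -/
def pairIndex (x : Fin (2 * n)) : Fin n := ⟨x.val / 2, by omega⟩

/-- The even element `2k` of the `k`-th pair. -/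
def pairBase (k : Fin n) : Fin (2 * n) := ⟨2 * k.val, by omega⟩

theorem pairIndex_pairBase (k : Fin n) : pairIndex (pairBase k) = k :=
  Fin.ext (Nat.mul_div_cancel_left k.val two_pos)

theorem pairIndex_eq_iff {x y : Fin (2 * n)} : pairIndex x = pairIndex y ↔ x = y ∨ x = ρ y := by
  simp only [pairIndex, Fin.ext_iff, val_rho]
  split_ifs <;> omega

theorem pairIndex_apply_congr {ξ : Perm (Fin (2 * n))} (hξ : Commute ξ ρ) {x y : Fin (2 * n)}
    (hxy : pairIndex x = pairIndex y) : pairIndex (ξ x) = pairIndex (ξ y) := by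
  refine pairIndex_eq_iff.2 ((pairIndex_eq_iff.1 hxy).imp (congrArg ξ) ?_)
  rintro rfl
  exact DFunLike.congr_fun hξ.eq y

/-- The action of the centralizer of `ρ` on the `n` pairs `{2k, 2k+1}`. -/
def pairPerm : Subgroup.centralizer {ρ} →* Perm (Fin n) :=
  MonoidHom.toHomPerm
    { toFun ξ k := pairIndex (ξ.1 (pairBase k))
      map_one' := funext pairIndex_pairBase
      map_mul' ξ _ := funext fun _ =>
        pairIndex_apply_congr (Subgroup.mem_centralizer_singleton_iff.1 ξ.2)
          (pairIndex_pairBase _).symm }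

theorem pairPerm_apply (ξ : Subgroup.centralizer {ρ}) (k : Fin n) :
    pairPerm ξ k = pairIndex (ξ.1 (pairBase k)) := rfl

theorem pairPerm_centralizerRotSq : pairPerm (centralizerRotSq n) = finRotate n := by
  ext k
  simp only [centralizerRotSq, pairPerm_apply, pairIndex, pairBase, pow_two, Perm.mul_apply,
    val_finRotate]
  split_ifs <;> omega

theorem pairPerm_centralizerRho : pairPerm (centralizerRho n) = 1 := by
  ext k
  rw [pairPerm_apply, centralizerRho, Perm.one_apply, pairIndex_eq_iff.2 (Or.inr rfl),
    pairIndex_pairBase]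

theorem sign_pairPerm_centralizerRotSq (hn : 1 ≤ n) (heven : Even n) :
    Perm.sign (pairPerm (centralizerRotSq n)) = -1 := by
  rw [pairPerm_centralizerRotSq, sign_finRotate, (Nat.Even.sub_odd hn heven odd_one).neg_one_pow]

/-- The sign of the permutation of the pairs `{2k, 2k+1}` induced by `ξ`, where `σ = β·ξ`; it is
the invariant separating the two halves of `U` when `n` is even. -/
def pairSign (σ : rotCoset n) : ℤˣ := Perm.sign (pairPerm (centralizerPart σ))

variable {σ : Perm (Fin (2 * n))}

theorem pairSign_conjB2 (hσ : σ ∈ rotCoset n) (hconj : conjB2 n σ ∈ rotCoset n) :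
    pairSign ⟨conjB2 n σ, hconj⟩ = pairSign ⟨σ, hσ⟩ := by
  have hpart : centralizerPart ⟨conjB2 n σ, hconj⟩ =
      centralizerRotSq n * centralizerPart ⟨σ, hσ⟩ * (centralizerRotSq n)⁻¹ :=
    Subtype.ext (inv_finRotate_mul_conjB2 n σ)
  simp only [pairSign, hpart, map_mul, map_inv, mul_inv_cancel_comm]

theorem pairSign_revMap (hn : 1 ≤ n) (heven : Even n) (hσ : σ ∈ rotCoset n) :
    pairSign ⟨revMap n σ, mapsTo_revMap_rotCoset n hσ⟩ = -pairSign ⟨σ, hσ⟩ := by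
  have hpart : centralizerPart ⟨revMap n σ, mapsTo_revMap_rotCoset n hσ⟩ =
      (centralizerRotSq n)⁻¹ * centralizerRev n * centralizerPart ⟨σ, hσ⟩ * centralizerRev n :=
    Subtype.ext (inv_finRotate_mul_revMap n σ)
  simp only [pairSign, hpart, map_mul, map_inv, sign_pairPerm_centralizerRotSq hn heven]
  rw [mul_right_comm, mul_assoc (-1)⁻¹, Int.units_mul_self, mul_one, inv_neg_one, neg_one_mul]

theorem pairSign_swapMap (hn : 1 ≤ n) (heven : Even n) (hσ : σ ∈ rotCoset n) :
    pairSign ⟨swapMap n σ, mapsTo_swapMap_rotCoset n hσ⟩ = -pairSign ⟨σ, hσ⟩ := by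
  have hpart : centralizerPart ⟨swapMap n σ, mapsTo_swapMap_rotCoset n hσ⟩ =
      (centralizerRotSq n)⁻¹ * centralizerRho n * (centralizerPart ⟨σ, hσ⟩)⁻¹ :=
    Subtype.ext (inv_finRotate_mul_swapMap n σ)
  simp only [pairSign, hpart, map_mul, map_inv, sign_pairPerm_centralizerRotSq hn heven,
    pairPerm_centralizerRho, mul_one, inv_neg_one, neg_one_mul, Int.units_inv_eq_self]

end PairSign

section Sign

variable {n} (σ : Perm (Fin (2 * n)))

theorem sign_conjB2 : Perm.sign (conjB2 n σ) = Perm.sign σ := by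
  rw [conjB2, Perm.sign_mul, Perm.sign_mul, Perm.sign_inv, mul_right_comm, Int.units_mul_self,
    one_mul]

theorem sign_revMap : Perm.sign (revMap n σ) = Perm.sign σ := by
  rw [revMap, Perm.sign_mul, Perm.sign_mul, mul_right_comm, Int.units_mul_self, one_mul]

theorem sign_swapMap (hodd : Odd n) : Perm.sign (swapMap n σ) = -Perm.sign σ := by
  rw [swapMap, Perm.sign_mul, Perm.sign_mul, Perm.sign_mul, Perm.sign_inv, Perm.sign_inv, sign_rho,
    hodd.neg_one_pow, mul_right_comm, mul_right_comm _ _ (Perm.sign β), Int.units_mul_self, one_mul,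
    neg_one_mul]

end Sign

section Counting

variable {n} {s : Set (Perm (Fin (2 * n)))}

theorem numClasses_conjB2_eq_two_mul_revMap (hn : 1 ≤ n) (heven : Even n) (hs : s ⊆ rotCoset n)
    (hrev : MapsTo (revMap n) s s) :
    numClasses n s {conjB2 n} = 2 * numClasses n s {conjB2 n, revMap n} := by
  rw [Set.pair_comm]
  have hconj : conjB2 n ∈ ({conjB2 n} : Set _) := rfl
  refine numClasses_eq_two_mul_numClasses_insert hrev (fun a => pairSign (Set.inclusion hs a)) ?_
    (fun a => pairSign_revMap hn heven (hs a.2)) ?_ ?_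
  · rintro _ rfl a h
    exact pairSign_conjB2 (hs a.2) (hs h)
  · rintro _ rfl a h
    exact Eq.symm <| quot_mk_step_apply hconj (conjB2_revMap_conjB2 n a)
  · intro a
    simp only [revMap_revMap]

theorem numClasses_conjB2_eq_two_mul_swapMap (hn : 1 ≤ n) (heven : Even n) (hs : s ⊆ rotCoset n)
    (hswap : MapsTo (swapMap n) s s) :
    numClasses n s {conjB2 n} = 2 * numClasses n s {conjB2 n, swapMap n} := by
  rw [Set.pair_comm]
  have hconj : conjB2 n ∈ ({conjB2 n} : Set _) := rfl
  refine numClasses_eq_two_mul_numClasses_insert hswap (fun a => pairSign (Set.inclusion hs a)) ?_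
    (fun a => pairSign_swapMap hn heven (hs a.2)) ?_ ?_
  · rintro _ rfl a h
    exact pairSign_conjB2 (hs a.2) (hs h)
  · rintro _ rfl a h
    exact quot_mk_step_apply hconj (swapMap_conjB2 n a).symm
  · intro a
    exact Eq.symm <| quot_mk_step_apply hconj (conjB2_swapMap_swapMap n (hs a.2))

theorem numClasses_conjB2_revMap_eq_two_mul_swapMap (hodd : Odd n) (hs : s ⊆ rotCoset n)
    (hrev : MapsTo (revMap n) s s) (hswap : MapsTo (swapMap n) s s) :
    numClasses n s {conjB2 n, revMap n} = 2 * numClasses n s {conjB2 n, revMap n, swapMap n} := by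
  rw [Set.pair_comm (revMap n), Set.insert_comm (conjB2 n) (swapMap n)]
  have hconj : conjB2 n ∈ ({conjB2 n, revMap n} : Set _) := Or.inl rfl
  refine numClasses_eq_two_mul_numClasses_insert hswap (fun a => Perm.sign a.1) ?_
    (fun a => sign_swapMap a.1 hodd) ?_ ?_
  · rintro _ (rfl | rfl) a -
    exacts [sign_conjB2 a.1, sign_revMap a.1]
  · rintro _ (rfl | rfl) a h
    · exact quot_mk_step_apply hconj (swapMap_conjB2 n a).symm
    · calc Quot.mk _ ⟨swapMap n (revMap n a), hswap h⟩
          = Quot.mk _ ⟨revMap n (swapMap n a), hrev (hswap a.2)⟩ :=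
            Eq.symm <| quot_mk_step_apply hconj (conjB2_swapMap_revMap n a)
        _ = Quot.mk _ ⟨swapMap n a, hswap a.2⟩ := quot_mk_step_apply (Or.inr rfl) rfl
  · intro a
    exact Eq.symm <| quot_mk_step_apply hconj (conjB2_swapMap_swapMap n (hs a.2))

theorem UOc_relations_general (n : ℕ) (hn : 1 ≤ n) {s : Set (Perm (Fin (2 * n)))}
    (hs : s ⊆ rotCoset n) (hrev : MapsTo (revMap n) s s) (hswap : MapsTo (swapMap n) s s) :
    (Even n → numClasses n s {conjB2 n, revMap n} = numClasses n s {conjB2 n, swapMap n}) ∧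
    (Odd n →
      numClasses n s {conjB2 n, revMap n}
        = 2 * numClasses n s {conjB2 n, revMap n, swapMap n}) := by
  refine ⟨fun heven => ?_, fun hodd =>
    numClasses_conjB2_revMap_eq_two_mul_swapMap hodd hs hrev hswap⟩
  exact Nat.eq_of_mul_eq_mul_left two_pos <|
    (numClasses_conjB2_eq_two_mul_revMap hn heven hs hrev).symm.trans
      (numClasses_conjB2_eq_two_mul_swapMap hn heven hs hswap)

end Counting

end Permutations

/-- Theorem 4, relation for UOc: `|UOc| = |OOb|` for n even and `|UOc| = 2·|UOb|`
for n odd. -/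
theorem UOc_relations (n : ℕ) (hn : 1 ≤ n) (g : ℕ) :
    (Even n →
      numClasses n (Ugen n g) {conjB2 n, revMap n}
        = numClasses n (Ugen n g) {conjB2 n, swapMap n}) ∧
    (Odd n →
      numClasses n (Ugen n g) {conjB2 n, revMap n}
        = 2 * numClasses n (Ugen n g) {conjB2 n, revMap n, swapMap n}) :=
  UOc_relations_general n hn (Ugen_subset_rotCoset n g) (mapsTo_revMap_Ugen n g)
    (mapsTo_swapMap_Ugen n g)
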